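/- For q, c ∈ ℤ[ω] with q ≡ c ≡ 1 (mod 3), the indicator of q ≡ c (mod 9) is given by (1/9)·Σ_{a,b=0}^{2} χ_c(ω^a λ^b)·conj(χ_q(ω^a λ^b)), where λ = 1 − ω and χ_m(·) = (·/m)₃. -/

import Mathlib

open Complex

noncomputable section

/-- The primitive cube root of unity `ω = e^{2πi/3}`. -/
def ω : ℂ := Complex.exp (2 * Real.pi * Complex.I / 3)

/-- The ring of Eisenstein integers `ℤ[ω]`, as a subring of `ℂ`. -/
def Zω : Subring ℂ := Subring.closure {ω}

/-- `ω` as an element of `ℤ[ω]`. -/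
def ωZ : Zω := ⟨ω, Subring.subset_closure rfl⟩

/-- The ramified prime `λ = 1 - ω` of `ℤ[ω]`. -/
def lamZ : Zω := 1 - ωZ

/-- The norm `N(a) = |a|²` from `ℚ(ω)` to `ℚ`, restricted to `ℤ[ω]`. -/
def Nm (a : Zω) : ℝ := Complex.normSq (a : ℂ)

/-- The norm of an Eisenstein integer, as a natural number. -/
def NmNat (a : Zω) : ℕ := ⌊Complex.normSq (a : ℂ)⌋₊

/-- `e(z) = e^{2πi Tr(z)} = e^{2πi (z + z̄)}`. -/
def eE (z : ℂ) : ℂ := Complex.exp (2 * Real.pi * Complex.I * (z + (starRingEnd ℂ) z))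

/-- `χ` is the cubic residue symbol `χ a b = (a/b)₃` on `ℤ[ω]`:
it is multiplicative in both arguments, and at prime moduli `π` coprime to `3`
it is given by the power-residue congruence
`(a/π)₃ ≡ a^{(N(π)-1)/3} (mod π)`, with values among `{1, ω, ω²}` (and `0` when `π ∣ a`). -/
def IsCubicSymbol (χ : Zω → Zω → Zω) : Prop :=
  (∀ a b₁ b₂ : Zω, χ a (b₁ * b₂) = χ a b₁ * χ a b₂) ∧
  (∀ a₁ a₂ b : Zω, χ (a₁ * a₂) b = χ a₁ b * χ a₂ b) ∧
  (∀ a : Zω, χ a 1 = 1) ∧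
  (∀ a π : Zω, Prime π → IsCoprime π 3 →
    (π ∣ a → χ a π = 0) ∧
    (¬ π ∣ a →
      ((χ a π : ℂ) = 1 ∨ (χ a π : ℂ) = ω ∨ (χ a π : ℂ) = ω ^ 2) ∧
      π ∣ (a ^ ((NmNat π - 1) / 3) - χ a π)))

/-- The shifted cubic Gauss sum `g(ν,c) = Σ_{d mod c} (d/c)₃ e(νd/c)`,
relative to a cubic residue symbol `χ`. -/
def gauss (χ : Zω → Zω → Zω) (ν c : Zω) : ℂ :=
  ∑' q : Zω ⧸ Ideal.span {c},
    ((χ (Quotient.out q) c : Zω) : ℂ) * eE (((ν * Quotient.out q : Zω) : ℂ) / (c : ℂ))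

/-- `μ` is the Möbius function of `ℤ[ω]`. -/
def IsMoebiusZω (μ : Zω → ℤ) : Prop :=
  μ 1 = 1 ∧
  (∀ a : Zω, ¬ Squarefree a → μ a = 0) ∧
  (∀ a b : Zω, IsCoprime a b → μ (a * b) = μ a * μ b) ∧
  (∀ π : Zω, Prime π → μ π = -1)

end

/-!
Write `c = 1 + 3(m + nω)`. The supplementary laws `χ_c(ω) = ω^{-(m+n)}` and `χ_c(λ) = ω^m` turn the
double sum into a product of two geometric sums, which detect whether the coordinates `m` and `n`
of `q` and `c` agree modulo `3`, that is, whether `q ≡ c (mod 9)`.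

Both laws are multiplicative in `c`, so it suffices to treat a prime `π ≡ 1 (mod 3)`, of norm
`3t + 1`, say. The Jacobi sum `J = J(χ_π, χ_π)` is then `-π`: it vanishes modulo `π`, has the norm
of `π`, and is `-1` modulo `3`. On the other hand `J = 2 + 3 ∑ χ_π(1 - y)` over the kernel of `χ_π`,
which consists of the `t`-th roots of unity. Since `ω^k ≡ 1 - kλ (mod λ²)`, that sum is
known modulo `λ²`, hence `J` modulo `9`, once `∏_{y ≠ 1} χ_π(1 - y) = χ_π(t)` is. Comparing the two
values determines both `t (mod 3)`, hence `χ_π(ω) = ω^t`, and `χ_π(t) = χ_π(3)⁻¹`, hence `χ_π(λ)`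
through `3 = -ω²λ²`.
-/

section RootsOfUnity

open Finset

variable {R : Type*} [CommRing R]

theorem one_sub_sq_dvd_pow_sub (x : R) (k : ℕ) : (1 - x) ^ 2 ∣ x ^ k - (1 - k * (1 - x)) := by
  have h := sq_dvd_add_pow_sub_sub (x - 1) 1 k
  simp only [add_sub_cancel, one_pow, one_mul] at h
  rw [show (1 - x) ^ 2 = (x - 1) ^ 2 by ring]
  convert h using 1
  ring

variable [IsDomain R]

theorem sq_add_self_add_one_eq_zero {ζ : R} (hζ : IsPrimitiveRoot ζ 3) : ζ ^ 2 + ζ + 1 = 0 := by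
  have h := hζ.geom_sum_eq_zero (by norm_num)
  simp only [sum_range_succ, sum_range_zero, zero_add, pow_zero, pow_one] at h
  linear_combination h

theorem eq_of_map_eq_of_pow_eq_one {S : Type*} [CommRing S] (f : R →+* S) {n : ℕ}
    (hn : (n : S) ≠ 0) {v w : R} (hv : v ^ n = 1) (hw : w ^ n = 1) (h : f v = f w) : v = w := by
  by_contra hne
  have hsum : ∑ i ∈ range n, v ^ i * w ^ (n - 1 - i) = 0 := by
    refine (mul_eq_zero.mp ?_).resolve_right (sub_ne_zero.mpr hne)
    rw [geom_sum₂_mul, hv, hw, sub_self]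
  have hmap := congrArg f hsum
  simp only [map_sum, map_mul, map_pow, h, geom_sum₂_self, map_zero] at hmap
  have hunit : IsUnit (f w) :=
    IsUnit.of_pow_eq_one (by rw [← map_pow, hw, map_one]) (by rintro rfl; simp at hn)
  exact hn ((hunit.pow _).mul_left_eq_zero.mp hmap)

theorem exists_prod_eq_pow_and_sq_dvd_sum_sub {ι : Type*} {n : ℕ} [NeZero n] {ζ : R}
    (hζ : IsPrimitiveRoot ζ n) (s : Finset ι) {g : ι → R} (hg : ∀ i ∈ s, g i ^ n = 1) :
    ∃ k : ℕ, ∏ i ∈ s, g i = ζ ^ k ∧ (1 - ζ) ^ 2 ∣ ∑ i ∈ s, g i - (#s - k * (1 - ζ)) := by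
  choose! e _ he using fun i hi ↦ hζ.eq_pow_of_pow_eq_one (hg i hi)
  refine ⟨∑ i ∈ s, e i, ?_, ?_⟩
  · rw [← prod_pow_eq_pow_sum]
    exact prod_congr rfl fun i hi ↦ (he i hi).symm
  · have hterm : ∑ i ∈ s, g i - (#s - (∑ i ∈ s, e i : ℕ) * (1 - ζ)) =
        ∑ i ∈ s, (ζ ^ e i - (1 - e i * (1 - ζ))) := by
      rw [← sum_congr rfl he]
      simp [sum_mul]
    exact hterm ▸ dvd_sum fun i _ ↦ one_sub_sq_dvd_pow_sub ζ (e i)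

open Polynomial in
theorem prod_nthRootsFinset_erase_one_one_sub [DecidableEq R] {n : ℕ} (hn : 0 < n) {ζ : R}
    (hζ : IsPrimitiveRoot ζ n) : ∏ y ∈ (nthRootsFinset n (1 : R)).erase 1, (1 - y) = n := by
  have hone : (1 : R) ∈ nthRootsFinset n (1 : R) := one_mem_nthRootsFinset hn
  have hgeom : ∑ i ∈ range n, (X : R[X]) ^ i =
      ∏ y ∈ (nthRootsFinset n (1 : R)).erase 1, (X - C y) := by
    refine mul_right_cancel₀ (X_sub_C_ne_zero (1 : R)) ?_
    rw [prod_erase_mul _ _ hone, ← X_pow_sub_one_eq_prod hn hζ, map_one, geom_sum_mul]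
  simpa [eval_finsetSum, eval_prod] using (congrArg (eval 1) hgeom).symm

theorem sum_range_pow_eq_ite {n : ℕ} {x : R} (hx : x ^ n = 1) [Decidable (x = 1)] :
    ∑ i ∈ range n, x ^ i = if x = 1 then (n : R) else 0 := by
  split_ifs with h
  · simp [h]
  · refine (mul_eq_zero.mp ?_).resolve_right (sub_ne_zero.mpr h)
    rw [geom_sum_mul, hx, sub_self]

end RootsOfUnity

theorem zpow_eq_zpow_iff_dvd_sub {K : Type*} [Field K] {n : ℕ} [NeZero n] {ζ : K}
    (hζ : IsPrimitiveRoot ζ n) {i j : ℤ} : ζ ^ i = ζ ^ j ↔ (n : ℤ) ∣ i - j := by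
  have h0 : ζ ≠ 0 := hζ.ne_zero (NeZero.ne n)
  rw [← hζ.zpow_eq_one_iff_dvd, zpow_sub₀ h0, div_eq_one_iff_eq (zpow_ne_zero j h0)]

open NumberField in
theorem range_comp_algebraMap_ringOfIntegers {K L : Type*} [Field K] [Field L] [CharZero K]
    {n : ℕ} [NeZero n] [IsCyclotomicExtension {n} ℚ K] {ζ : K} (hζ : IsPrimitiveRoot ζ n)
    (f : K →+* L) : (f.comp (algebraMap (𝓞 K) K)).range = Subring.closure {f ζ} := by
  have htop : Subring.closure {hζ.toInteger} = ⊤ := by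
    have h := hζ.integralPowerBasis.adjoin_gen_eq_top
    rw [hζ.integralPowerBasis_gen, Algebra.adjoin_int] at h
    exact congrArg Subalgebra.toSubring h
  rw [RingHom.range_eq_map, ← htop, RingHom.map_closure, Set.image_singleton]
  rfl

open scoped IntermediateField in
theorem isPrincipalIdealRing_closure_of_isPrimitiveRoot_three {L : Type*} [Field L] [CharZero L]
    {ζ : L} (hζ : IsPrimitiveRoot ζ 3) : IsPrincipalIdealRing (Subring.closure {ζ}) := by
  have hcyc : IsCyclotomicExtension {3} ℚ ℚ⟮ζ⟯ :=
    (IntermediateField.isCyclotomicExtension_singleton_iff_eq_adjoin _ _ _ _ hζ).mpr rfl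
  have := IsCyclotomicExtension.numberField {3} ℚ ℚ⟮ζ⟯
  have := IsCyclotomicExtension.Rat.three_pid ℚ⟮ζ⟯
  have hgen : IsPrimitiveRoot (IntermediateField.AdjoinSimple.gen ℚ ζ) 3 :=
    IsPrimitiveRoot.coe_submonoidClass_iff.mp hζ
  have hrange := range_comp_algebraMap_ringOfIntegers hgen (algebraMap ℚ⟮ζ⟯ L)
  rw [IntermediateField.AdjoinSimple.algebraMap_gen] at hrange
  rw [← hrange]
  exact .of_surjective _ (RingHom.rangeRestrict_surjective _)

section Jacobi

open Finset

theorem mulChar_apply_pow_eq_one_of_isUnit {A R : Type*} [CommMonoid A] [CommMonoidWithZero R]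
    {n : ℕ} {ψ : MulChar A R} (hψ : ψ ^ n = 1) {x : A} (hx : IsUnit x) : ψ x ^ n = 1 := by
  obtain ⟨u, rfl⟩ := hx
  rw [← MulChar.pow_apply_coe, hψ, MulChar.one_apply_coe]

theorem mulChar_neg_one_eq_one_of_odd {A R : Type*} [CommRing A] [CommMonoidWithZero R] {n : ℕ}
    (hn : Odd n) {ψ : MulChar A R} (hψ : ψ ^ n = 1) : ψ (-1) = 1 := by
  rw [← mulChar_apply_pow_eq_one_of_isUnit hψ isUnit_one.neg, ← map_pow, hn.neg_one_pow]

theorem sum_range_jacobiSum_pow {A R : Type*} [CommRing A] [Fintype A] [CommRing R] [IsDomain R]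
    [DecidableEq R] {n : ℕ} {ψ : MulChar A R} (hψ : ψ ^ n = 1) (φ : MulChar A R) :
    ∑ i ∈ range n, jacobiSum (ψ ^ i) φ = n * ∑ y with ψ y = 1, φ (1 - y) := by
  have hker (y : A) : ∑ i ∈ range n, (ψ ^ i) y = if ψ y = 1 then (n : R) else 0 := by
    by_cases hy : IsUnit y
    · obtain ⟨u, rfl⟩ := hy
      simp only [MulChar.pow_apply_coe]
      exact sum_range_pow_eq_ite (mulChar_apply_pow_eq_one_of_isUnit hψ u.isUnit)
    · simp [MulChar.map_nonunit _ hy]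
  simp only [jacobiSum]
  rw [sum_comm, sum_filter, mul_sum]
  refine sum_congr rfl fun y _ ↦ ?_
  rw [← sum_mul, hker]
  split_ifs <;> simp

variable {F : Type*} [Field F]

section Reduction

variable {R : Type*} [CommRing R] [IsDomain R] (f : R →+* F) {ψ : MulChar F R} {m n : ℕ}

theorem mulChar_apply_eq_one_iff_pow_eq_one (hψ : ∀ x, f (ψ x) = x ^ n) (hm : (m : F) ≠ 0)
    (hord : ψ ^ m = 1) (y : F) : ψ y = 1 ↔ y ^ n = 1 := by
  refine ⟨fun h ↦ by rw [← hψ, h, map_one], fun h ↦ ?_⟩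
  have hy : y ≠ 0 := by
    rintro rfl
    rw [← hψ, MulChar.map_zero, map_zero] at h
    exact zero_ne_one h
  exact eq_of_map_eq_of_pow_eq_one f hm (mulChar_apply_pow_eq_one_of_isUnit hord hy.isUnit)
    (one_pow m) (by rw [hψ, h, map_one])

theorem mulChar_apply_map_eq_pow_of_pow_eq_one (hψ : ∀ x, f (ψ x) = x ^ n) (hm : (m : F) ≠ 0)
    (hord : ψ ^ m = 1) {ζ : R} (hζ : ζ ^ m = 1) : ψ (f ζ) = ζ ^ n := by
  have hunit : IsUnit ζ := IsUnit.of_pow_eq_one hζ (by rintro rfl; simp at hm)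
  exact eq_of_map_eq_of_pow_eq_one f hm (mulChar_apply_pow_eq_one_of_isUnit hord (hunit.map f))
    (by rw [← pow_mul, mul_comm, pow_mul, hζ, one_pow]) (by rw [hψ, map_pow])

end Reduction

variable [Fintype F]

theorem jacobiSum_self_of_pow_three_eq_one {R : Type*} [CommRing R] [IsDomain R] [DecidableEq R]
    {ψ : MulChar F R} (hψ : ψ ^ 3 = 1) (hne : ψ ≠ 1) :
    jacobiSum ψ ψ = 2 + 3 * ∑ y with ψ y = 1, ψ (1 - y) := by
  have hinv : ψ ^ 2 = ψ⁻¹ := eq_inv_of_mul_eq_one_left (by rw [← pow_succ, hψ])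
  have h := sum_range_jacobiSum_pow hψ ψ
  rw [sum_range_succ, sum_range_succ, sum_range_one, pow_zero, pow_one, hinv,
    jacobiSum_one_nontrivial hne, jacobiSum_comm ψ⁻¹, jacobiSum_nontrivial_inv hne,
    mulChar_neg_one_eq_one_of_odd (by decide) hψ] at h
  push_cast at h
  linear_combination h

theorem jacobiSum_mul_conj {φ ψ : MulChar F ℂ} (hφ : φ ≠ 1) (hψ : ψ ≠ 1) (hφψ : φ * ψ ≠ 1) :
    jacobiSum φ ψ * (starRingEnd ℂ) (jacobiSum φ ψ) = Fintype.card F := by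
  have hchar : ringChar ℂ ≠ ringChar F := by
    rw [ringChar.eq_zero]
    exact (CharP.ringChar_ne_zero_of_finite F).symm
  rw [← jacobiSum_mul_jacobiSum_inv hchar hφ hψ hφψ]
  simp only [jacobiSum, map_sum, map_mul, starRingEnd_apply, MulChar.star_apply']

theorem sum_pow_mul_one_sub_pow_eq_zero {k l : ℕ} (h : k + l < Fintype.card F - 1) :
    ∑ x : F, x ^ k * (1 - x) ^ l = 0 := by
  have hexpand (x : F) : x ^ k * (1 - x) ^ l =
      ∑ j ∈ range (l + 1), (-1) ^ j * (l.choose j : F) * x ^ (k + j) := by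
    rw [sub_eq_neg_add, add_pow, mul_sum]
    refine sum_congr rfl fun j _ ↦ ?_
    rw [neg_pow]
    ring
  simp only [hexpand]
  rw [sum_comm]
  refine sum_eq_zero fun j hj ↦ ?_
  rw [← mul_sum, FiniteField.sum_pow_lt_card_sub_one F _ (by grind), mul_zero]

theorem exists_isPrimitiveRoot_of_dvd_card_sub_one {n : ℕ} (hn : n ∣ Fintype.card F - 1) :
    ∃ ζ : F, IsPrimitiveRoot ζ n := by
  classical
  obtain ⟨g, hg⟩ := IsCyclic.exists_ofOrder_eq_natCard (α := Fˣ)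
  rw [Nat.card_eq_fintype_card, Fintype.card_units] at hg
  obtain ⟨m, hm⟩ := hn
  have hprim : IsPrimitiveRoot (g : F) (Fintype.card F - 1) := by
    rw [← hg, ← orderOf_units]
    exact IsPrimitiveRoot.orderOf _
  exact ⟨g ^ m, hprim.pow (Nat.sub_pos_of_lt Fintype.one_lt_card) (by rw [hm, mul_comm])⟩

theorem natCast_mul_natCast_eq_neg_one_of_card_eq {m n : ℕ} (h : Fintype.card F = m * n + 1) :
    (m * n : F) = -1 := by
  have hcard := FiniteField.cast_card_eq_zero F
  rw [h] at hcard
  push_cast at hcard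
  exact eq_neg_of_add_eq_zero_left hcard

theorem natCast_ne_zero_of_card_eq {m n : ℕ} (h : Fintype.card F = m * n + 1) : (m : F) ≠ 0 :=
  left_ne_zero_of_mul (natCast_mul_natCast_eq_neg_one_of_card_eq h ▸ neg_ne_zero.mpr one_ne_zero)

section Reduction

variable {R : Type*} [CommRing R] (f : R →+* F) {φ ψ : MulChar F R} {k n : ℕ}

theorem map_jacobiSum_eq_zero (hφ : ∀ x, f (φ x) = x ^ k) (hψ : ∀ x, f (ψ x) = x ^ n)
    (h : k + n < Fintype.card F - 1) : f (jacobiSum φ ψ) = 0 := by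
  simp only [jacobiSum, map_sum, map_mul, hφ, hψ, sum_pow_mul_one_sub_pow_eq_zero h]

theorem mulChar_ne_one_of_map_apply_eq_pow (hψ : ∀ x, f (ψ x) = x ^ n)
    (h : n < Fintype.card F - 1) : ψ ≠ 1 := by
  classical
  rintro rfl
  have hsum := FiniteField.sum_pow_lt_card_sub_one F n h
  simp_rw [← hψ] at hsum
  rw [← map_sum, MulChar.sum_one_eq_card_units, Fintype.card_units, map_natCast,
    Nat.cast_sub Fintype.card_pos, FiniteField.cast_card_eq_zero] at hsum
  simp at hsum

end Reduction

open Polynomial in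
theorem exists_apply_eq_pow_and_nine_dvd_jacobiSum_sub {R : Type*} [CommRing R] [IsDomain R]
    {ζ : R} (hζ : IsPrimitiveRoot ζ 3) {ψ : MulChar F R} (hψ : ψ ^ 3 = 1) (hne : ψ ≠ 1) {n : ℕ}
    (hcard : Fintype.card F = 3 * n + 1) (hker : ∀ y, ψ y = 1 ↔ y ^ n = 1) :
    ∃ k : ℕ, ψ n = ζ ^ k ∧ 9 ∣ jacobiSum ψ ψ - (3 * n - 1 - 3 * k * (1 - ζ)) := by
  classical
  have hn : 0 < n := by
    have := Fintype.one_lt_card (α := F)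
    omega
  obtain ⟨ξ, hξ⟩ := exists_isPrimitiveRoot_of_dvd_card_sub_one (F := F) (n := n) ⟨3, by omega⟩
  set s := (nthRootsFinset n (1 : F)).erase 1 with hs
  have hone : (1 : F) ∈ nthRootsFinset n (1 : F) := one_mem_nthRootsFinset hn
  have hs_card : (#s : R) = n - 1 := by
    rw [hs, card_erase_of_mem hone, hξ.card_nthRootsFinset, Nat.cast_pred hn]
  have hs_sum : ∑ y with ψ y = 1, ψ (1 - y) = ∑ y ∈ s, ψ (1 - y) := by
    have hfilter : univ.filter (fun y ↦ ψ y = 1) = nthRootsFinset n (1 : F) := by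
      ext y
      simp [hker, mem_nthRootsFinset hn]
    rw [hfilter, ← add_sum_erase _ _ hone, sub_self, MulChar.map_zero, zero_add]
  obtain ⟨k, hprod, hdvd⟩ := exists_prod_eq_pow_and_sq_dvd_sum_sub hζ s
    (g := fun y ↦ ψ (1 - y)) fun y hy ↦
      mulChar_apply_pow_eq_one_of_isUnit hψ (sub_ne_zero.mpr (ne_of_mem_erase hy).symm).isUnit
  refine ⟨k, by rw [← hprod, ← map_prod, prod_nthRootsFinset_erase_one_one_sub hn hξ], ?_⟩
  have hthree : (3 : R) ∣ (1 - ζ) ^ 2 :=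
    ⟨-ζ, by linear_combination sq_add_self_add_one_eq_zero hζ⟩
  obtain ⟨r, hr⟩ := hthree.trans hdvd
  refine ⟨r, ?_⟩
  rw [jacobiSum_self_of_pow_three_eq_one hψ hne, hs_sum]
  linear_combination 3 * hr + 3 * hs_card

end Jacobi

section Omega

theorem isPrimitiveRoot_omega : IsPrimitiveRoot ω 3 := by
  simpa [ω] using Complex.isPrimitiveRoot_exp 3 (by norm_num)

theorem isPrimitiveRoot_omegaZ : IsPrimitiveRoot ωZ 3 :=
  IsPrimitiveRoot.coe_submonoidClass_iff.mp isPrimitiveRoot_omega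

theorem omegaZ_sq_add_omegaZ_add_one : ωZ ^ 2 + ωZ + 1 = 0 :=
  sq_add_self_add_one_eq_zero isPrimitiveRoot_omegaZ

theorem three_eq_neg_mul_sq : (3 : Zω) = -1 * (ωZ * lamZ) ^ 2 := by
  unfold lamZ
  linear_combination (ωZ ^ 2 - 3 * ωZ + 3) * omegaZ_sq_add_omegaZ_add_one

theorem conj_omega : (starRingEnd ℂ) ω = ω⁻¹ :=
  (Complex.inv_eq_conj (Complex.norm_eq_one_of_pow_eq_one isPrimitiveRoot_omega.pow_eq_one
    (by norm_num))).symm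

theorem sum_range_omega_zpow_pow (j : ℤ) :
    ∑ a ∈ Finset.range 3, (ω ^ j) ^ a = if (3 : ℤ) ∣ j then 3 else 0 := by
  classical
  have hcube : (ω ^ j) ^ 3 = 1 := by
    rw [← zpow_natCast, zpow_comm, zpow_natCast, isPrimitiveRoot_omega.pow_eq_one, one_zpow]
  simp [sum_range_pow_eq_ite hcube, isPrimitiveRoot_omega.zpow_eq_one_iff_dvd]

end Omega

section Coordinates

theorem exists_eq_intCast_add_mul_omegaZ (z : Zω) : ∃ a b : ℤ, z = a + b * ωZ := by
  suffices h : ∃ a b : ℤ, (z : ℂ) = a + b * ω by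
    obtain ⟨a, b, h⟩ := h
    exact ⟨a, b, Subtype.ext (by simpa [ωZ] using h)⟩
  obtain ⟨z, hz⟩ := z
  dsimp only
  induction hz using Subring.closure_induction with
  | mem x hx => exact ⟨0, 1, by simpa using hx⟩
  | zero => exact ⟨0, 0, by simp⟩
  | one => exact ⟨1, 0, by simp⟩
  | add x y _ _ hx hy =>
    obtain ⟨⟨a, b, rfl⟩, ⟨c, d, rfl⟩⟩ := And.intro hx hy
    exact ⟨a + c, b + d, by push_cast; ring⟩
  | neg x _ hx =>
    obtain ⟨a, b, rfl⟩ := hx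
    exact ⟨-a, -b, by push_cast; ring⟩
  | mul x y _ _ hx hy =>
    obtain ⟨⟨a, b, rfl⟩, ⟨c, d, rfl⟩⟩ := And.intro hx hy
    refine ⟨a * c - b * d, a * d + b * c - b * d, ?_⟩
    push_cast
    linear_combination (b * d : ℂ) * sq_add_self_add_one_eq_zero isPrimitiveRoot_omega

theorem normSq_intCast_add_mul_omegaZ (a b : ℤ) :
    Complex.normSq ((a + b * ωZ : Zω) : ℂ) = (a ^ 2 - a * b + b ^ 2 : ℤ) := by
  have hsq := sq_add_self_add_one_eq_zero isPrimitiveRoot_omega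
  have hinv : ω⁻¹ = ω ^ 2 :=
    inv_eq_of_mul_eq_one_right (by rw [← pow_succ', isPrimitiveRoot_omega.pow_eq_one])
  apply Complex.ofReal_injective
  rw [Complex.normSq_eq_conj_mul_self]
  push_cast
  simp only [map_add, map_mul, map_intCast, ωZ, conj_omega, hinv]
  linear_combination (a * b + b ^ 2 * (ω - 1) : ℂ) * hsq

theorem intCast_add_mul_omegaZ_inj {a b c d : ℤ} :
    (a + b * ωZ : Zω) = c + d * ωZ ↔ a = c ∧ b = d := by
  refine ⟨fun h ↦ ?_, by rintro ⟨rfl, rfl⟩; rfl⟩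
  have hzero : ((a - c : ℤ) + (b - d : ℤ) * ωZ : Zω) = 0 := by
    push_cast
    linear_combination h
  have hnorm := normSq_intCast_add_mul_omegaZ (a - c) (b - d)
  rw [hzero, ZeroMemClass.coe_zero, map_zero, eq_comm, Int.cast_eq_zero] at hnorm
  constructor <;> nlinarith [sq_nonneg (2 * (a - c) - (b - d)), sq_nonneg (2 * (b - d) - (a - c))]

theorem intCast_dvd_intCast_add_mul_omegaZ {k a b : ℤ} :
    (k : Zω) ∣ a + b * ωZ ↔ k ∣ a ∧ k ∣ b := by
  constructor
  · rintro ⟨t, ht⟩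
    obtain ⟨c, d, rfl⟩ := exists_eq_intCast_add_mul_omegaZ t
    have hcoord : (a + b * ωZ : Zω) = (k * c : ℤ) + (k * d : ℤ) * ωZ := by
      push_cast
      linear_combination ht
    obtain ⟨hac, hbd⟩ := intCast_add_mul_omegaZ_inj.mp hcoord
    exact ⟨⟨c, hac⟩, ⟨d, hbd⟩⟩
  · rintro ⟨⟨c, rfl⟩, ⟨d, rfl⟩⟩
    exact ⟨c + d * ωZ, by push_cast; ring⟩

theorem exists_eq_one_add_three_mul {c : Zω} (hc : 3 ∣ c - 1) :
    ∃ m n : ℤ, c = 1 + 3 * (m + n * ωZ) := by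
  obtain ⟨r, hr⟩ := hc
  obtain ⟨m, n, rfl⟩ := exists_eq_intCast_add_mul_omegaZ r
  exact ⟨m, n, by linear_combination hr⟩

theorem three_dvd_one_add_three_mul_sub_one (z : Zω) : 3 ∣ 1 + 3 * z - 1 :=
  ⟨z, by ring⟩

theorem nine_dvd_one_add_three_mul_sub_iff {m n m' n' : ℤ} :
    (9 : Zω) ∣ 1 + 3 * (m + n * ωZ) - (1 + 3 * (m' + n' * ωZ)) ↔ 3 ∣ m - m' ∧ 3 ∣ n - n' := by
  have hcoord : (1 + 3 * (m + n * ωZ) - (1 + 3 * (m' + n' * ωZ)) : Zω) =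
      (3 * (m - m') : ℤ) + (3 * (n - n') : ℤ) * ωZ := by
    push_cast
    ring
  rw [hcoord, show (9 : Zω) = (9 : ℤ) by norm_num, intCast_dvd_intCast_add_mul_omegaZ]
  omega

end Coordinates

section Norm

instance isPrincipalIdealRing_eisenstein : IsPrincipalIdealRing Zω :=
  isPrincipalIdealRing_closure_of_isPrimitiveRoot_three isPrimitiveRoot_omega

/-- The `ℤ`-basis `1, ω` of the Eisenstein integers, used to compute `Algebra.norm ℤ`. -/
noncomputable def eisensteinBasis : Module.Basis (Fin 2) ℤ Zω :=
  Module.Basis.mk (v := ![1, ωZ])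
    (by
      rw [LinearIndependent.pair_iff]
      intro s t h
      exact intCast_add_mul_omegaZ_inj.mp (by simpa using h))
    (by
      intro z _
      obtain ⟨a, b, rfl⟩ := exists_eq_intCast_add_mul_omegaZ z
      rw [Matrix.range_cons, Matrix.range_cons, Matrix.range_empty, Set.union_empty,
        Set.singleton_union, Submodule.mem_span_pair]
      exact ⟨a, b, by simp⟩)

theorem eisensteinBasis_repr (a b : ℤ) : ⇑(eisensteinBasis.repr (a + b * ωZ)) = ![a, b] := by
  have h : (a + b * ωZ : Zω) = a • eisensteinBasis 0 + b • eisensteinBasis 1 := by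
    simp [eisensteinBasis]
  rw [h, map_add, map_smul, map_smul, Module.Basis.repr_self, Module.Basis.repr_self]
  ext i
  fin_cases i <;> simp

instance free_eisenstein : Module.Free ℤ Zω := .of_basis eisensteinBasis

instance finite_eisenstein : Module.Finite ℤ Zω := .of_basis eisensteinBasis

theorem norm_intCast_add_mul_omegaZ (a b : ℤ) :
    Algebra.norm ℤ (a + b * ωZ : Zω) = a ^ 2 - a * b + b ^ 2 := by
  have hone : (a + b * ωZ : Zω) * eisensteinBasis 0 = a + b * ωZ := by simp [eisensteinBasis]
  have homega : (a + b * ωZ : Zω) * eisensteinBasis 1 = (-b : ℤ) + (a - b : ℤ) * ωZ := by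
    simp only [eisensteinBasis, Module.Basis.mk_apply, Matrix.cons_val_one, Matrix.cons_val_fin_one]
    push_cast
    linear_combination b * omegaZ_sq_add_omegaZ_add_one
  simp only [Algebra.norm_eq_matrix_det eisensteinBasis, Matrix.det_fin_two,
    Algebra.leftMulMatrix_eq_repr_mul, hone, homega, eisensteinBasis_repr, Matrix.cons_val_zero,
    Matrix.cons_val_one, Matrix.cons_val_fin_one]
  ring

theorem normSq_eq_norm (z : Zω) : Complex.normSq (z : ℂ) = Algebra.norm ℤ z := by
  obtain ⟨a, b, rfl⟩ := exists_eq_intCast_add_mul_omegaZ z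
  rw [normSq_intCast_add_mul_omegaZ, norm_intCast_add_mul_omegaZ]

theorem natCast_nmNat (z : Zω) : (NmNat z : ℤ) = Algebra.norm ℤ z := by
  have hnonneg : 0 ≤ Algebra.norm ℤ z := by
    exact_mod_cast normSq_eq_norm z ▸ Complex.normSq_nonneg (z : ℂ)
  obtain ⟨n, hn⟩ := Int.eq_ofNat_of_zero_le hnonneg
  rw [NmNat, normSq_eq_norm, hn, Int.cast_natCast, Nat.floor_natCast]

theorem nmNat_mul (x y : Zω) : NmNat (x * y) = NmNat x * NmNat y := by
  zify
  simp only [natCast_nmNat, map_mul]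

theorem natCard_quotient_span_singleton (z : Zω) : Nat.card (Zω ⧸ Ideal.span {z}) = NmNat z := by
  rw [← Submodule.cardQuot_apply, ← Ideal.absNorm_apply, Ideal.absNorm_span_singleton,
    ← natCast_nmNat, Int.natAbs_natCast]

theorem nmNat_eq_one_iff {z : Zω} : NmNat z = 1 ↔ IsUnit z := by
  rw [← natCard_quotient_span_singleton, ← Submodule.cardQuot_apply, ← Ideal.absNorm_apply,
    Ideal.absNorm_eq_one_iff, Ideal.span_singleton_eq_top]

end Norm

section Primary

theorem eq_one_of_isUnit_of_three_dvd_sub_one {u : Zω} (hu : IsUnit u) (h : 3 ∣ u - 1) :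
    u = 1 := by
  obtain ⟨m, n, rfl⟩ := exists_eq_one_add_three_mul h
  have hnorm := norm_intCast_add_mul_omegaZ (1 + 3 * m) (3 * n)
  have hcoord : (((1 + 3 * m : ℤ) : Zω) + ((3 * n : ℤ) : Zω) * ωZ) = 1 + 3 * (m + n * ωZ) := by
    push_cast
    ring
  rw [hcoord, ← natCast_nmNat, nmNat_eq_one_iff.mpr hu, Nat.cast_one] at hnorm
  have hn : n = 0 := by
    by_contra hn
    have : 0 < n ^ 2 := by positivity
    nlinarith [sq_nonneg (2 * (1 + 3 * m) - 3 * n)]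
  subst hn
  have hm : m = 0 := by
    have : m * (2 + 3 * m) = 0 := by linarith
    rcases mul_eq_zero.mp this with h | h <;> omega
  simp [hm]

theorem isCoprime_three_of_dvd {p c : Zω} (hp : p ∣ c) (hc : 3 ∣ c - 1) : IsCoprime p 3 := by
  obtain ⟨r, hr⟩ := hc
  have : IsCoprime c 3 := ⟨1, -r, by linear_combination hr⟩
  exact this.of_isCoprime_of_dvd_left hp

theorem not_three_dvd_add_of_isCoprime {a b : ℤ} (h : IsCoprime (a + b * ωZ) 3) :
    ¬ 3 ∣ a + b := by
  rintro ⟨t, ht⟩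
  have hthree : lamZ ∣ 3 := ⟨-(ωZ ^ 2 * lamZ), by linear_combination three_eq_neg_mul_sq⟩
  have hdvd : lamZ ∣ a + b * ωZ := by
    have hcoord : (a + b * ωZ : Zω) = 3 * t - b * lamZ := by
      have : (a + b : Zω) = 3 * t := by exact_mod_cast ht
      unfold lamZ
      linear_combination this
    exact hcoord ▸ dvd_sub (hthree.mul_right _) (dvd_mul_left _ _)
  have hnorm := norm_intCast_add_mul_omegaZ 1 (-1)
  have hlam : ((1 : ℤ) + (-1 : ℤ) * ωZ : Zω) = lamZ := by
    push_cast
    unfold lamZ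
    ring
  rw [hlam, ← natCast_nmNat, nmNat_eq_one_iff.mpr (h.isUnit_of_dvd' hdvd hthree)] at hnorm
  norm_num at hnorm

theorem three_dvd_sq_sub_one {s : ℤ} (hs : ¬ 3 ∣ s) : 3 ∣ s ^ 2 - 1 := by
  have hcop : IsCoprime s (3 : ℕ) := ((Int.prime_three.coprime_iff_not_dvd).mpr hs).symm
  exact (Int.ModEq.pow_card_sub_one_eq_one Nat.prime_three hcop).symm.dvd

theorem nmNat_mod_three_of_isCoprime {z : Zω} (hz : IsCoprime z 3) : NmNat z % 3 = 1 := by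
  obtain ⟨a, b, rfl⟩ := exists_eq_intCast_add_mul_omegaZ z
  have hsq := three_dvd_sq_sub_one (not_three_dvd_add_of_isCoprime hz)
  have hnorm : (NmNat (a + b * ωZ) : ℤ) = (a + b) ^ 2 - 3 * (a * b) := by
    rw [natCast_nmNat, norm_intCast_add_mul_omegaZ]
    ring
  omega

theorem exists_three_dvd_pow_mul_sub_intCast {a b : ℤ} (h : ¬ 3 ∣ a + b) :
    ∃ k : ℕ, 3 ∣ ωZ ^ k * (a + b * ωZ) - (a + b : ℤ) := by
  -- For `s = a + b`: modulo `λ ^ 2`, that is, modulo `3`, `ω ^ k (s - b λ) ≡ s - (b + k s) λ`.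
  obtain ⟨u, hu⟩ := three_dvd_sq_sub_one h
  obtain ⟨k, t, hk⟩ : ∃ (k : ℕ) (t : ℤ), b + k * (a + b) = 3 * t := by
    refine ⟨(-b * (a + b) % 3).toNat, -b * u - (-b * (a + b) / 3) * (a + b), ?_⟩
    rw [Int.toNat_of_nonneg (Int.emod_nonneg _ (by norm_num)), Int.emod_def]
    linear_combination -b * hu
  obtain ⟨r, hr⟩ := one_sub_sq_dvd_pow_sub ωZ k
  have hk_cast : (b + k * (a + b) : Zω) = 3 * t := by exact_mod_cast hk
  refine ⟨k, -(ωZ * (r * (a + b * ωZ) + k * b)) - t * (1 - ωZ), ?_⟩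
  push_cast
  linear_combination (a + b * ωZ) * hr - (1 - ωZ) * hk_cast +
    (r * (a + b * ωZ) + k * b) * omegaZ_sq_add_omegaZ_add_one

theorem exists_associated_three_dvd_sub_one {z : Zω} (hz : IsCoprime z 3) :
    ∃ z', Associated z z' ∧ 3 ∣ z' - 1 := by
  obtain ⟨a, b, rfl⟩ := exists_eq_intCast_add_mul_omegaZ z
  have hmod := not_three_dvd_add_of_isCoprime hz
  obtain ⟨k, r, hr⟩ := exists_three_dvd_pow_mul_sub_intCast hmod
  obtain ⟨ε, hε, v, hv⟩ : ∃ ε : ℤ, IsUnit ε ∧ 3 ∣ ε * (a + b) - 1 := by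
    have : (a + b) % 3 = 1 ∨ (a + b) % 3 = 2 := by omega
    rcases this with h | h
    · exact ⟨1, isUnit_one, by omega⟩
    · exact ⟨-1, isUnit_one.neg, by omega⟩
  have hunit : IsUnit (ε * ωZ ^ k : Zω) :=
    (hε.map (Int.castRingHom Zω)).mul ((isPrimitiveRoot_omegaZ.isUnit (by norm_num)).pow k)
  have hv_cast : (ε * (a + b) - 1 : Zω) = 3 * v := by exact_mod_cast hv
  refine ⟨ε * ωZ ^ k * (a + b * ωZ), (associated_unit_mul_left _ _ hunit).symm, ε * r + v, ?_⟩
  push_cast at hr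
  linear_combination ε * hr + hv_cast

theorem primary_induction {P : Zω → Prop} (one : P 1)
    (prime_mul : ∀ p c, Prime p → 3 ∣ p - 1 → 3 ∣ c - 1 → P c → P (p * c))
    {c : Zω} (hc : 3 ∣ c - 1) : P c := by
  suffices h : ∀ a c : Zω, Associated a c → 3 ∣ c - 1 → P c from h c c (.refl c) hc
  intro a
  induction a using UniqueFactorizationMonoid.induction_on_prime with
  | h₁ =>
    intro c ha hc
    rw [(associated_zero_iff_eq_zero c).mp ha.symm] at hc
    have hunit : IsUnit (3 : Zω) := isCoprime_self.mp (isCoprime_three_of_dvd (dvd_zero 3) hc)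
    have hthree : ((3 : ℤ) : Zω) ∣ (1 : ℤ) + (0 : ℤ) * ωZ := by simpa using hunit.dvd
    exact absurd (intCast_dvd_intCast_add_mul_omegaZ.mp hthree).1 (by norm_num)
  | h₂ u hu =>
    intro c ha hc
    rwa [eq_one_of_isUnit_of_three_dvd_sub_one (ha.isUnit hu) hc]
  | h₃ a p _ hp ih =>
    intro c hac hc
    have hpc : p ∣ c := (dvd_mul_right p a).trans hac.dvd
    obtain ⟨p', hpp', hp'⟩ := exists_associated_three_dvd_sub_one (isCoprime_three_of_dvd hpc hc)
    obtain ⟨c', rfl⟩ := hpp'.symm.dvd.trans hpc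
    have hac' : Associated a c' := hac.of_mul_left hpp' hp.ne_zero
    have hc' : 3 ∣ c' - 1 := by
      have := dvd_sub hc (hp'.mul_right c')
      rwa [show p' * c' - 1 - (p' - 1) * c' = c' - 1 by ring] at this
    exact prime_mul p' c' (hpp'.prime hp) hp' hc' (ih c' hac' hc')

end Primary

section PrimeModulus

variable {F : Type*} [Field F] [Fintype F]

theorem nmNat_jacobiSum {φ ψ : MulChar F Zω} (hφ : φ ≠ 1) (hψ : ψ ≠ 1) (hφψ : φ * ψ ≠ 1) :
    NmNat (jacobiSum φ ψ) = Fintype.card F := by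
  have hne {θ : MulChar F Zω} (hθ : θ ≠ 1) : θ.ringHomComp Zω.subtype ≠ 1 :=
    (MulChar.ringHomComp_ne_one_iff Subtype.val_injective).mpr hθ
  have h := jacobiSum_mul_conj (hne hφ) (hne hψ) (by rw [← MulChar.ringHomComp_mul]; exact hne hφψ)
  rw [jacobiSum_ringHomComp, Complex.mul_conj, Subring.subtype_apply] at h
  have hnormSq : Complex.normSq (jacobiSum φ ψ : Zω) = Fintype.card F := by exact_mod_cast h
  rw [NmNat, hnormSq, Nat.floor_natCast]

variable (f : Zω →+* F) {ψ : MulChar F Zω} {n : ℕ}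

theorem exists_apply_natCast_eq_pow_and_nine_dvd_jacobiSum_sub (hψ : ∀ x, f (ψ x) = x ^ n)
    (hord : ψ ^ 3 = 1) (hcard : Fintype.card F = 3 * n + 1) :
    ∃ k : ℕ, ψ n = ωZ ^ k ∧ 9 ∣ jacobiSum ψ ψ - (3 * n - 1 - 3 * k * (1 - ωZ)) := by
  have hpos := Fintype.one_lt_card (α := F)
  exact exists_apply_eq_pow_and_nine_dvd_jacobiSum_sub isPrimitiveRoot_omegaZ hord
    (mulChar_ne_one_of_map_apply_eq_pow f hψ (by omega)) hcard
    (mulChar_apply_eq_one_iff_pow_eq_one f hψ (natCast_ne_zero_of_card_eq hcard) hord)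

theorem jacobiSum_self_eq_neg {π : Zω} (hπ : 3 ∣ π - 1) (hker : ∀ x, f x = 0 → π ∣ x)
    (hnorm : NmNat π = Fintype.card F) (hψ : ∀ x, f (ψ x) = x ^ n) (hord : ψ ^ 3 = 1)
    (hcard : Fintype.card F = 3 * n + 1) : jacobiSum ψ ψ = -π := by
  have hpos := Fintype.one_lt_card (α := F)
  have hne : ψ ≠ 1 := mulChar_ne_one_of_map_apply_eq_pow f hψ (by omega)
  have hsq : ψ * ψ ≠ 1 := fun h ↦ hne (by rw [← hord, pow_succ, pow_two, h, one_mul])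
  obtain ⟨u, hu⟩ := hker _ (map_jacobiSum_eq_zero f hψ hψ (by omega))
  have hunit : IsUnit u := by
    rw [← nmNat_eq_one_iff]
    have h := nmNat_jacobiSum hne hne hsq
    rw [hu, nmNat_mul, hnorm] at h
    exact Nat.eq_of_mul_eq_mul_left (by omega) (h.trans (mul_one _).symm)
  have hprimary : 3 ∣ -u - 1 := by
    obtain ⟨k, -, r, hr⟩ := exists_apply_natCast_eq_pow_and_nine_dvd_jacobiSum_sub f hψ hord hcard
    obtain ⟨t, ht⟩ := hπ
    exact ⟨t * u - 3 * r - n + k * (1 - ωZ), by linear_combination u * ht + hu - hr⟩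
  rw [hu, ← neg_neg u, eq_one_of_isUnit_of_three_dvd_sub_one hunit.neg hprimary, mul_neg_one]

theorem mulChar_apply_map_omegaZ (hψ : ∀ x, f (ψ x) = x ^ n) (hord : ψ ^ 3 = 1)
    (hcard : Fintype.card F = 3 * n + 1) : ψ (f ωZ) = ωZ ^ n :=
  mulChar_apply_map_eq_pow_of_pow_eq_one f hψ (natCast_ne_zero_of_card_eq hcard) hord
    isPrimitiveRoot_omegaZ.pow_eq_one

theorem mulChar_apply_map_lamZ (hψ : ∀ x, f (ψ x) = x ^ n) (hord : ψ ^ 3 = 1)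
    (hcard : Fintype.card F = 3 * n + 1) {k : ℕ} (hk : ψ n = ωZ ^ k) :
    ψ (f lamZ) = ωZ ^ (2 * n + k) := by
  have hfactor : (3 : F) = -1 * (f ωZ * f lamZ) ^ 2 := by
    simpa only [map_ofNat, map_mul, map_neg, map_one, map_pow] using congrArg f three_eq_neg_mul_sq
  have hcube : ψ (f lamZ) ^ 3 = 1 := by
    refine mulChar_apply_pow_eq_one_of_isUnit hord (IsUnit.mk0 _ fun h ↦ ?_)
    rw [h, mul_zero, zero_pow two_ne_zero, mul_zero] at hfactor
    exact natCast_ne_zero_of_card_eq hcard hfactor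
  have hneg_one : ψ (-1) = 1 := mulChar_neg_one_eq_one_of_odd (by decide) hord
  have hprod : ψ 3 * ψ n = 1 := by
    have hcast : (3 : F) * n = -1 := natCast_mul_natCast_eq_neg_one_of_card_eq hcard
    rw [← map_mul, hcast, hneg_one]
  rw [hfactor, map_mul, map_pow, map_mul, hneg_one,
    mulChar_apply_map_omegaZ f hψ hord hcard, hk] at hprod
  linear_combination ωZ ^ (2 * n + k) * hcube - ψ (f lamZ) * hprod

variable {a b : ℤ}

theorem exists_apply_natCast_eq_pow_and_three_dvd (hker : ∀ x, f x = 0 → 1 + 3 * (a + b * ωZ) ∣ x)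
    (hnorm : NmNat (1 + 3 * (a + b * ωZ)) = Fintype.card F) (hψ : ∀ x, f (ψ x) = x ^ n)
    (hord : ψ ^ 3 = 1) (hcard : Fintype.card F = 3 * n + 1) :
    ∃ k : ℕ, ψ n = ωZ ^ k ∧ 3 ∣ k - a - n ∧ 3 ∣ b + k := by
  obtain ⟨k, hk, hdvd⟩ := exists_apply_natCast_eq_pow_and_nine_dvd_jacobiSum_sub f hψ hord hcard
  rw [jacobiSum_self_eq_neg f ⟨a + b * ωZ, by ring⟩ hker hnorm hψ hord hcard] at hdvd
  have hcoord : (-(1 + 3 * (a + b * ωZ)) - (3 * n - 1 - 3 * k * (1 - ωZ)) : Zω) =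
      (3 * (k - a - n) : ℤ) + (-3 * (b + k) : ℤ) * ωZ := by
    push_cast
    ring
  rw [hcoord, show (9 : Zω) = (9 : ℤ) by norm_num, intCast_dvd_intCast_add_mul_omegaZ] at hdvd
  exact ⟨k, hk, by omega, by omega⟩

theorem supplementary_laws_of_map_apply_eq_pow
    (hker : ∀ x, f x = 0 → 1 + 3 * (a + b * ωZ) ∣ x)
    (hnorm : NmNat (1 + 3 * (a + b * ωZ)) = Fintype.card F) (hψ : ∀ x, f (ψ x) = x ^ n)
    (hord : ψ ^ 3 = 1) (hcard : Fintype.card F = 3 * n + 1) :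
    (ψ (f ωZ) : ℂ) = ω ^ (-(a + b)) ∧ (ψ (f lamZ) : ℂ) = ω ^ a := by
  obtain ⟨k, hk, hka, hkb⟩ :=
    exists_apply_natCast_eq_pow_and_three_dvd f hker hnorm hψ hord hcard
  rw [mulChar_apply_map_omegaZ f hψ hord hcard, mulChar_apply_map_lamZ f hψ hord hcard hk,
    SubmonoidClass.coe_pow, SubmonoidClass.coe_pow, ← zpow_natCast, ← zpow_natCast]
  change ω ^ _ = _ ∧ ω ^ _ = _
  rw [zpow_eq_zpow_iff_dvd_sub isPrimitiveRoot_omega,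
    zpow_eq_zpow_iff_dvd_sub isPrimitiveRoot_omega]
  push_cast
  omega

end PrimeModulus

namespace IsCubicSymbol

variable {χ : Zω → Zω → Zω} {π : Zω}

theorem map_mul_left (hχ : IsCubicSymbol χ) (a b c : Zω) : χ (a * b) c = χ a c * χ b c :=
  hχ.2.1 a b c

theorem map_mul_right (hχ : IsCubicSymbol χ) (a b c : Zω) : χ a (b * c) = χ a b * χ a c :=
  hχ.1 a b c

theorem map_one_right (hχ : IsCubicSymbol χ) (a : Zω) : χ a 1 = 1 :=
  hχ.2.2.1 a

theorem map_one_left_of_ne_zero (hχ : IsCubicSymbol χ) {a c : Zω} (h : χ a c ≠ 0) :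
    χ 1 c = 1 := by
  have := hχ.map_mul_left 1 a c
  rwa [one_mul, eq_comm, mul_eq_right₀ h] at this

theorem apply_eq_zero (hχ : IsCubicSymbol χ) (hπ : Prime π) (hcop : IsCoprime π 3) {a : Zω}
    (ha : π ∣ a) : χ a π = 0 :=
  (hχ.2.2.2 a π hπ hcop).1 ha

theorem apply_pow_three (hχ : IsCubicSymbol χ) (hπ : Prime π) (hcop : IsCoprime π 3) {a : Zω}
    (ha : ¬ π ∣ a) : χ a π ^ 3 = 1 := by
  have hω := isPrimitiveRoot_omega.pow_eq_one
  apply Subtype.ext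
  push_cast
  rcases ((hχ.2.2.2 a π hπ hcop).2 ha).1 with h | h | h <;> rw [h]
  · exact one_pow 3
  · exact hω
  · rw [← pow_mul, mul_comm, pow_mul, hω, one_pow]

theorem mk_apply (hχ : IsCubicSymbol χ) (hπ : Prime π) (hcop : IsCoprime π 3) (a : Zω) :
    Ideal.Quotient.mk (Ideal.span {π}) (χ a π) =
      Ideal.Quotient.mk (Ideal.span {π}) a ^ ((NmNat π - 1) / 3) := by
  by_cases ha : π ∣ a
  · have hmod := nmNat_mod_three_of_isCoprime hcop
    have hone : NmNat π ≠ 1 := fun h ↦ hπ.not_isUnit (nmNat_eq_one_iff.mp h)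
    rw [hχ.apply_eq_zero hπ hcop ha, (Ideal.Quotient.eq_zero_iff_dvd π a).mpr ha,
      zero_pow (by omega), map_zero]
  · rw [← map_pow, eq_comm, Ideal.Quotient.mk_eq_mk_iff_sub_mem, Ideal.mem_span_singleton]
    exact ((hχ.2.2.2 a π hπ hcop).2 ha).2

theorem apply_congr (hχ : IsCubicSymbol χ) (hπ : Prime π) (hcop : IsCoprime π 3) {a b : Zω}
    (hab : π ∣ a - b) : χ a π = χ b π := by
  by_cases ha : π ∣ a
  · rw [hχ.apply_eq_zero hπ hcop ha, hχ.apply_eq_zero hπ hcop ((dvd_sub_right ha).mp hab)]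
  · have hb : ¬ π ∣ b := fun hb ↦ ha ((dvd_sub_left hb).mp hab)
    have hthree : Ideal.Quotient.mk (Ideal.span {π}) 3 ≠ 0 := by
      rw [Ne, Ideal.Quotient.eq_zero_iff_dvd]
      exact fun h ↦ hπ.not_isUnit (hcop.isUnit_of_dvd' dvd_rfl h)
    refine eq_of_map_eq_of_pow_eq_one (Ideal.Quotient.mk (Ideal.span {π})) (n := 3) hthree
      (hχ.apply_pow_three hπ hcop ha) (hχ.apply_pow_three hπ hcop hb) ?_
    rw [hχ.mk_apply hπ hcop, hχ.mk_apply hπ hcop, Ideal.Quotient.mk_eq_mk_iff_sub_mem _ _ |>.mpr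
      (Ideal.mem_span_singleton.mpr hab)]

/-- The cubic residue symbol `(·/π)₃` of a prime `π` coprime to `3`, as a multiplicative character
of the residue field, which makes the theory of Jacobi sums available. -/
noncomputable def residueChar (hχ : IsCubicSymbol χ) (hπ : Prime π) (hcop : IsCoprime π 3) :
    MulChar (Zω ⧸ Ideal.span {π}) Zω where
  toFun x := Quotient.liftOn' x (χ · π) fun a b h ↦ hχ.apply_congr hπ hcop <|
    Ideal.mem_span_singleton.mp (Submodule.quotientRel_def _ |>.mp h)
  map_one' := by
    refine hχ.map_one_left_of_ne_zero (a := 1) fun h ↦ ?_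
    have := hχ.apply_pow_three hπ hcop hπ.not_dvd_one
    simp [h] at this
  map_mul' x y := Quotient.inductionOn₂' x y fun a b ↦ hχ.map_mul_left a b π
  map_nonunit' x := Quotient.inductionOn' x fun a ha ↦ by
    refine hχ.apply_eq_zero hπ hcop (by_contra fun hdvd ↦ ha ?_)
    obtain ⟨r, s, h⟩ := (hπ.irreducible.coprime_iff_not_dvd).mpr hdvd
    refine IsUnit.of_mul_eq_one_right (Ideal.Quotient.mk _ s) ?_
    change Ideal.Quotient.mk _ s * Ideal.Quotient.mk _ a = 1
    rw [← map_mul, ← map_one (Ideal.Quotient.mk _), Ideal.Quotient.mk_eq_mk_iff_sub_mem,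
      Ideal.mem_span_singleton]
    exact ⟨-r, by linear_combination h⟩

theorem residueChar_mk (hχ : IsCubicSymbol χ) (hπ : Prime π) (hcop : IsCoprime π 3) (a : Zω) :
    hχ.residueChar hπ hcop (Ideal.Quotient.mk _ a) = χ a π :=
  rfl

theorem residueChar_pow_three (hχ : IsCubicSymbol χ) (hπ : Prime π) (hcop : IsCoprime π 3) :
    hχ.residueChar hπ hcop ^ 3 = 1 := by
  ext u
  obtain ⟨a, ha⟩ := Ideal.Quotient.mk_surjective (u : Zω ⧸ Ideal.span {π})
  have hdvd : ¬ π ∣ a := fun hdvd ↦ by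
    have hne := (u.isUnit.map (hχ.residueChar hπ hcop)).ne_zero
    rw [← ha, residueChar_mk] at hne
    exact hne (hχ.apply_eq_zero hπ hcop hdvd)
  rw [MulChar.pow_apply_coe, MulChar.one_apply_coe, ← ha, residueChar_mk,
    hχ.apply_pow_three hπ hcop hdvd]

theorem supplementary_laws_of_prime (hχ : IsCubicSymbol χ) {m n : ℤ}
    (hπ : Prime (1 + 3 * (m + n * ωZ))) :
    (χ ωZ (1 + 3 * (m + n * ωZ)) : ℂ) = ω ^ (-(m + n)) ∧
      (χ lamZ (1 + 3 * (m + n * ωZ)) : ℂ) = ω ^ m := by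
  have hcop := isCoprime_three_of_dvd dvd_rfl (three_dvd_one_add_three_mul_sub_one (m + n * ωZ))
  set π : Zω := 1 + 3 * (m + n * ωZ)
  have : (Ideal.span {π}).IsMaximal := PrincipalIdealRing.isMaximal_of_irreducible hπ.irreducible
  let := Ideal.Quotient.field (Ideal.span {π})
  have hmod := nmNat_mod_three_of_isCoprime hcop
  have hcard := natCard_quotient_span_singleton π
  have : Finite (Zω ⧸ Ideal.span {π}) := Nat.finite_of_card_ne_zero (by omega)
  let := Fintype.ofFinite (Zω ⧸ Ideal.span {π})
  rw [Nat.card_eq_fintype_card] at hcard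
  exact supplementary_laws_of_map_apply_eq_pow (Ideal.Quotient.mk (Ideal.span {π}))
    (ψ := hχ.residueChar hπ hcop) (n := (NmNat π - 1) / 3)
    (fun x ↦ (Ideal.Quotient.eq_zero_iff_dvd π x).mp) hcard.symm
    (fun x ↦ Quotient.inductionOn' x (hχ.mk_apply hπ hcop)) (hχ.residueChar_pow_three hπ hcop)
    (by omega)

theorem supplementary_laws (hχ : IsCubicSymbol χ) (m n : ℤ) :
    (χ ωZ (1 + 3 * (m + n * ωZ)) : ℂ) = ω ^ (-(m + n)) ∧
      (χ lamZ (1 + 3 * (m + n * ωZ)) : ℂ) = ω ^ m := by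
  have hω : ω ≠ 0 := isPrimitiveRoot_omega.ne_zero (by norm_num)
  refine primary_induction (P := fun c ↦ ∀ m n : ℤ, c = 1 + 3 * (m + n * ωZ) →
    (χ ωZ c : ℂ) = ω ^ (-(m + n)) ∧ (χ lamZ c : ℂ) = ω ^ m) ?_ ?_
    (three_dvd_one_add_three_mul_sub_one _) m n rfl
  · intro m n h
    have hdvd : (9 : Zω) ∣ 1 + 3 * ((0 : ℤ) + (0 : ℤ) * ωZ) - (1 + 3 * (m + n * ωZ)) :=
      ⟨0, by push_cast; linear_combination h⟩
    rw [nine_dvd_one_add_three_mul_sub_iff] at hdvd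
    rw [hχ.map_one_right, hχ.map_one_right, OneMemClass.coe_one, eq_comm, eq_comm (a := 1),
      isPrimitiveRoot_omega.zpow_eq_one_iff_dvd, isPrimitiveRoot_omega.zpow_eq_one_iff_dvd]
    push_cast
    omega
  · intro p c hp hp1 hc1 ih m n h
    obtain ⟨m₁, n₁, rfl⟩ := exists_eq_one_add_three_mul hp1
    obtain ⟨m₂, n₂, rfl⟩ := exists_eq_one_add_three_mul hc1
    have hdvd : (9 : Zω) ∣
        1 + 3 * ((m₁ + m₂ : ℤ) + (n₁ + n₂ : ℤ) * ωZ) - (1 + 3 * (m + n * ωZ)) :=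
      ⟨-((m₁ + n₁ * ωZ) * (m₂ + n₂ * ωZ)), by push_cast; linear_combination h⟩
    rw [nine_dvd_one_add_three_mul_sub_iff] at hdvd
    obtain ⟨hωp, hlamp⟩ := hχ.supplementary_laws_of_prime hp
    obtain ⟨hωc, hlamc⟩ := ih m₂ n₂ rfl
    rw [hχ.map_mul_right, hχ.map_mul_right, MulMemClass.coe_mul, MulMemClass.coe_mul, hωp, hlamp,
      hωc, hlamc, ← zpow_add₀ hω, ← zpow_add₀ hω, zpow_eq_zpow_iff_dvd_sub isPrimitiveRoot_omega,
      zpow_eq_zpow_iff_dvd_sub isPrimitiveRoot_omega]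
    push_cast
    omega

theorem apply_pow_mul_pow (hχ : IsCubicSymbol χ) (m n : ℤ) (a b : ℕ) :
    (χ (ωZ ^ a * lamZ ^ b) (1 + 3 * (m + n * ωZ)) : ℂ) = (ω ^ (-(m + n))) ^ a * (ω ^ m) ^ b := by
  obtain ⟨homega, hlam⟩ := hχ.supplementary_laws m n
  have hne : χ ωZ (1 + 3 * (m + n * ωZ)) ≠ 0 := fun h ↦
    zpow_ne_zero _ (isPrimitiveRoot_omega.ne_zero (by norm_num)) (homega.symm.trans (by simp [h]))
  let χc : Zω →* Zω := ⟨⟨(χ · (1 + 3 * (m + n * ωZ))), hχ.map_one_left_of_ne_zero hne⟩,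
    fun x y ↦ hχ.map_mul_left x y _⟩
  have h : χc (ωZ ^ a * lamZ ^ b) = χc ωZ ^ a * χc lamZ ^ b := by simp only [map_mul, map_pow]
  rw [← homega, ← hlam]
  exact congrArg Subtype.val h

end IsCubicSymbol

open Complex Classical in
/-- for `q ≡ c ≡ 1 (mod 3)`, the indicator of `q ≡ c (mod 9)` equals
`(1/9) Σ_{a,b=0}^{2} χ_c(ωᵃλᵇ) conj(χ_q(ωᵃλᵇ))`, where `χ_m(x) = (x/m)₃`. -/
theorem indicator_mod_nine (χ : Zω → Zω → Zω) (hχ : IsCubicSymbol χ)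
    (q c : Zω) (hq : (3 : Zω) ∣ (q - 1)) (hc : (3 : Zω) ∣ (c - 1)) :
    (if (9 : Zω) ∣ (q - c) then (1 : ℂ) else 0) =
      (1 / 9) * ∑ a ∈ Finset.range 3, ∑ b ∈ Finset.range 3,
        ((χ (ωZ ^ a * lamZ ^ b) c : Zω) : ℂ) *
          (starRingEnd ℂ) ((χ (ωZ ^ a * lamZ ^ b) q : Zω) : ℂ) := by
  obtain ⟨m, n, rfl⟩ := exists_eq_one_add_three_mul hc
  obtain ⟨m', n', rfl⟩ := exists_eq_one_add_three_mul hq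
  have hterm (a b : ℕ) :
      (χ (ωZ ^ a * lamZ ^ b) (1 + 3 * (m + n * ωZ)) : ℂ) *
        (starRingEnd ℂ) (χ (ωZ ^ a * lamZ ^ b) (1 + 3 * (m' + n' * ωZ))) =
      (ω ^ (m' + n' - (m + n))) ^ a * (ω ^ (m - m')) ^ b := by
    have hω : ω ≠ 0 := isPrimitiveRoot_omega.ne_zero (by norm_num)
    rw [hχ.apply_pow_mul_pow, hχ.apply_pow_mul_pow, map_mul, map_pow, map_pow, map_zpow₀,
      map_zpow₀, conj_omega, inv_zpow', inv_zpow', mul_mul_mul_comm, ← mul_pow, ← mul_pow,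
      ← zpow_add₀ hω, ← zpow_add₀ hω]
    ring_nf
  simp only [hterm, ← Finset.sum_mul_sum, sum_range_omega_zpow_pow,
    nine_dvd_one_add_three_mul_sub_iff]
  split_ifs <;> first | omega | norm_num
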